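/- Let A₁ and A₂ be nondeterministic Büchi automata over the same alphabet Σ, let B = A₁ × KVMH(A₂) be the product generalized Büchi automaton with condition {β₁, β₂} = {α₁ × L₂, L₁ × α₂} (where L₁, α₁ are the states and accepting states of A₁ and L₂, α₂ those of KVMH(A₂)), and let F'_B = ν y · ( μ x₁ · [Pre^B(x₁) ∪ (Pre^B(y) ∩ β₁)] ∩ μ x₂ · [Pre^B(x₂) ∪ (Pre^B(y) ∩ β₂)] ). Then L(A₁) ⊆ L(A₂) if and only if ι_B ∉ F'_B, where ι_B is the initial state of B. -/

import Mathlib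

/-!
The proof has two independent halves.

*Emptiness.* The nested fixed point `FixF` of a generalized Büchi automaton contains the initial
state iff the language is nonempty (`GBA.init_mem_FixF_iff`). The states of an accepting run form
a post-fixed point of the outer operator. Conversely, from each state of `FixF` one can reach
`β₁`, and also `β₂`, and step back into `FixF`; alternating these finite paths for ever gives an
accepting run (`exists_fair_path`). No finiteness of the state space is needed.

*Complementation.* `KVMH M k` accepts exactly the words rejected by `M`.

If `M` has an accepting run `ρ` on `w`, the least rank `n` with `(ρ i, n) ∈ s i` is nonincreasing,
hence eventually constant. An odd limit contradicts the accepting visits of `ρ`; with an even limit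
the pair never leaves the obligation set, which therefore never becomes empty
(`not_mem_lang_of_KVMH`).

If `M` rejects `w`, the run DAG of `M` on `w` is peeled (`peel`): alternately the vertices with
finitely many descendants and the vertices from which no accepting state can be reached are
deleted. As `w` is rejected, each deletion of the second kind removes an infinite path of
non-accepting vertices, so that after `2 (|L| - |α|) + 1` steps nothing is left (`peel_empty`). The
index of the step at which a vertex disappears is its rank; these ranks are nonincreasing along
edges and even at accepting states, and no infinite path has even ranks only
(`no_inf_evenRank`), so the obligation set empties infinitely often (`mem_KVMH_lang`).
-/

/-- A nondeterministic Büchi automaton (NBW) over states `Q` and alphabet `A`: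
an initial state, a transition function `δ : Q × A → 2^Q` and accepting states. -/
structure NBW (Q : Type*) (A : Type*) where
  init : Q
  delta : Q → A → Set Q
  acc : Set Q

namespace NBW

variable {Q A : Type*}

/-- A run of an NBW on the infinite word `w`. -/
def IsRun (M : NBW Q A) (w : ℕ → A) (ρ : ℕ → Q) : Prop :=
  ρ 0 = M.init ∧ ∀ i, ρ (i + 1) ∈ M.delta (ρ i) (w i)

/-- The language of an NBW: words having a run visiting accepting states infinitely often. -/
def Lang (M : NBW Q A) : Set (ℕ → A) :=
  {w | ∃ ρ, M.IsRun w ρ ∧ ∀ n, ∃ i ≥ n, ρ i ∈ M.acc}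

/-- `Pre_σ(S)`: the σ-predecessors of the set `S`. -/
def PreSigma (M : NBW Q A) (σ : A) (S : Set Q) : Set Q :=
  {l | ∃ l' ∈ S, l' ∈ M.delta l σ}

/-- `Pre(S) = ⋃_σ Pre_σ(S)`. -/
def Pre (M : NBW Q A) (S : Set Q) : Set Q :=
  {l | ∃ σ, ∃ l' ∈ S, l' ∈ M.delta l σ}

/-- A pre-order `r` is a simulation for the NBW `M`. -/
def Simulation (M : NBW Q A) (r : Q → Q → Prop) : Prop :=
  (∀ l1 l2 l3 σ, r l3 l1 → l2 ∈ M.delta l1 σ →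
      ∃ l4, r l4 l2 ∧ l4 ∈ M.delta l3 σ) ∧
  (∀ l ∈ M.acc, ∀ l', r l' l → l' ∈ M.acc)

end NBW

/-- A set `S` is `r`-(downward-)closed. -/
def RClosed {Q : Type*} (r : Q → Q → Prop) (S : Set Q) : Prop :=
  ∀ l1 l2, r l1 l2 → l2 ∈ S → l1 ∈ S
/-- `Q_k`: sets of pairs `(l, n)` with `n ≤ k` and `n` even whenever `l ∈ α`. -/
def Qk {Q A : Type*} (M : NBW Q A) (k : ℕ) : Set (Set (Q × ℕ)) :=
  {s | ∀ p ∈ s, p.2 ≤ k ∧ (p.1 ∈ M.acc → Even p.2)}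

/-- `odd = L × [k]^odd`. -/
def kvOdd (Q : Type*) (k : ℕ) : Set (Q × ℕ) := {p | Odd p.2 ∧ p.2 ≤ k}

/-- `∀ (l,n) ∈ s, ∀ l' ∈ δ(l,σ), ∃ n' ≤ n, (l',n') ∈ s'`. -/
def kvStep {Q A : Type*} (M : NBW Q A) (σ : A) (s s' : Set (Q × ℕ)) : Prop :=
  ∀ p ∈ s, ∀ l' ∈ M.delta p.1 σ, ∃ n' ≤ p.2, (l', n') ∈ s'

-- The composition of the Kupferman-Vardi and Miyano-Hayashi constructions:
-- an NBW over `Q_k × Q_k` (embedded in pairs of sets of pairs) accepting `L^c(M)`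
-- when `k = 2(|L| - |α|)`.
open Classical in
noncomputable def KVMH {Q A : Type*} (M : NBW Q A) (k : ℕ) :
    NBW (Set (Q × ℕ) × Set (Q × ℕ)) A where
  init := ({(M.init, k)}, ∅)
  delta := fun p σ =>
    if p.2 = ∅ then
      {q | ∃ s' ∈ Qk M k, q = (s', s' \ kvOdd Q k) ∧ kvStep M σ p.1 s'}
    else
      {q | ∃ s' ∈ Qk M k, ∃ o', q = (s', o' \ kvOdd Q k) ∧ o' ⊆ s' ∧
            kvStep M σ p.1 s' ∧ kvStep M σ p.2 o'}
  acc := {p | p.2 = ∅}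

/-- The pre-order `≼_univ` on `Q_k × Q_k`. -/
def univLe {Q : Type*} (p q : Set (Q × ℕ) × Set (Q × ℕ)) : Prop :=
  (∀ x ∈ p.1, ∃ n' ≤ x.2, (x.1, n') ∈ q.1) ∧
  (∀ x ∈ p.2, ∃ n' ≤ x.2, (x.1, n') ∈ q.2) ∧
  (p.2 = ∅ ↔ q.2 = ∅)
/-- A generalized Büchi automaton with two accepting sets `β₁, β₂`. -/
structure GBA (Q : Type*) (A : Type*) where
  init : Q
  delta : Q → A → Set Q
  acc1 : Set Q
  acc2 : Set Q

namespace GBA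

variable {Q A : Type*}

def IsRun (B : GBA Q A) (w : ℕ → A) (ρ : ℕ → Q) : Prop :=
  ρ 0 = B.init ∧ ∀ i, ρ (i + 1) ∈ B.delta (ρ i) (w i)

/-- Language: words with a run visiting both `β₁` and `β₂` infinitely often. -/
def Lang (B : GBA Q A) : Set (ℕ → A) :=
  {w | ∃ ρ, B.IsRun w ρ ∧ (∀ n, ∃ i ≥ n, ρ i ∈ B.acc1) ∧ (∀ n, ∃ i ≥ n, ρ i ∈ B.acc2)}

def Pre (B : GBA Q A) (S : Set Q) : Set Q :=
  {l | ∃ σ, ∃ l' ∈ S, l' ∈ B.delta l σ}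

def preHom (B : GBA Q A) : Set Q →o Set Q :=
  ⟨B.Pre, by rintro S T hST l ⟨σ, l', hl', hd⟩; exact ⟨σ, l', hST hl', hd⟩⟩

/-- `x ↦ Pre(x) ∪ (Pre(Y) ∩ β)`. -/
def innerHom (B : GBA Q A) (β : Set Q) (Y : Set Q) : Set Q →o Set Q :=
  ⟨fun X => B.Pre X ∪ (B.Pre Y ∩ β), by
    intro S T hST
    exact Set.union_subset_union_left _ ((preHom B).mono hST)⟩

/-- `y ↦ μx₁·[Pre(x₁) ∪ (Pre(y) ∩ β₁)] ∩ μx₂·[Pre(x₂) ∪ (Pre(y) ∩ β₂)]`. -/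
def outerHom (B : GBA Q A) : Set Q →o Set Q :=
  ⟨fun Y => OrderHom.lfp (B.innerHom B.acc1 Y) ∩ OrderHom.lfp (B.innerHom B.acc2 Y), by
    intro Y Y' hY
    apply Set.inter_subset_inter <;>
    · apply OrderHom.lfp.mono
      intro X
      exact Set.union_subset_union_right _
        (Set.inter_subset_inter_left _ ((preHom B).mono hY))⟩

/-- `F'_B = ν y · (μx₁·[Pre(x₁) ∪ (Pre(y) ∩ β₁)] ∩ μx₂·[Pre(x₂) ∪ (Pre(y) ∩ β₂)])`. -/
def FixF (B : GBA Q A) : Set Q := OrderHom.gfp B.outerHom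

end GBA

/-- The product of two Büchi automata, with generalized Büchi condition
`{β₁, β₂} = {α₁ × L₂, L₁ × α₂}`. -/
def NBW.prod {Q1 Q2 A : Type*} (M1 : NBW Q1 A) (M2 : NBW Q2 A) : GBA (Q1 × Q2) A where
  init := (M1.init, M2.init)
  delta := fun p σ => {q | q.1 ∈ M1.delta p.1 σ ∧ q.2 ∈ M2.delta p.2 σ}
  acc1 := {p | p.1 ∈ M1.acc}
  acc2 := {p | p.2 ∈ M2.acc}

/-! ### Infinite paths and the fixed point -/

/-- There is a finite `R`-path from `q` to a state of `P` which has a successor in `F`. -/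
inductive Ev {V : Type*} (R : V → V → Prop) (F P : Set V) : V → Prop
  | here {q q' : V} : q ∈ P → R q q' → q' ∈ F → Ev R F P q
  | step {q q' : V} : R q q' → Ev R F P q' → Ev R F P q

/-- `EvN R F P n q`: as `Ev`, with a path of exactly `n` steps to `P`. -/
def EvN {V : Type*} (R : V → V → Prop) (F P : Set V) : ℕ → V → Prop
  | 0, q => q ∈ P ∧ ∃ q' ∈ F, R q q'
  | n + 1, q => ∃ q', R q q' ∧ EvN R F P n q'

lemma Ev.exists_evN {V : Type*} {R : V → V → Prop} {F P : Set V} {q : V} (h : Ev R F P q) :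
    ∃ n, EvN R F P n q := by
  induction h with
  | here hP hR hF => exact ⟨0, hP, _, hF, hR⟩
  | step hR _ ih =>
    obtain ⟨n, hn⟩ := ih
    exact ⟨n + 1, _, hR, hn⟩

/-- If both targets `P true`, `P false` can be reached from each state of `F` with a return to `F`,
then each state of `F` starts an infinite path visiting both targets infinitely often. -/
lemma exists_fair_path {V : Type*} (R : V → V → Prop) (F : Set V) (P : Bool → Set V)
    (h : ∀ q ∈ F, ∀ c, Ev R F (P c) q) (q : V) (hq : q ∈ F) :
    ∃ ρ : ℕ → V, ρ 0 = q ∧ (∀ i, R (ρ i) (ρ (i + 1))) ∧ ∀ c n, ∃ i ≥ n, ρ i ∈ P c := by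
  -- States are annotated with the current target and the number of steps left to reach it.
  let T := {x : V × Bool × ℕ // EvN R F (P x.2.1) x.2.2 x.1}
  have hnext : ∀ x : T, ∃ y : T, R x.1.1 y.1.1 ∧
      (x.1.2.2 = 0 → y.1.2.1 = !x.1.2.1) ∧
      (∀ n, x.1.2.2 = n + 1 → y.1.2.1 = x.1.2.1 ∧ y.1.2.2 = n) := by
    rintro ⟨⟨v, c, n⟩, hx⟩
    cases n with
    | zero =>
      obtain ⟨_, q', hF, hR⟩ := hx
      obtain ⟨m, hm⟩ := (h q' hF (!c)).exists_evN
      exact ⟨⟨(q', !c, m), hm⟩, hR, by simp, by simp⟩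
    | succ n =>
      obtain ⟨q', hR, hn⟩ := hx
      exact ⟨⟨(q', c, n), hn⟩, hR, by simp, by simp⟩
  choose f hf using hnext
  obtain ⟨m, hm⟩ := (h q hq true).exists_evN
  let ρ : ℕ → T := fun i => f^[i] ⟨(q, true, m), hm⟩
  have hρ : ∀ i, ρ (i + 1) = f (ρ i) := fun i => Function.iterate_succ_apply' f i _
  -- The counter decreases to `0`, at which time the current target is visited.
  have key : ∀ n i, (ρ i).1.2.2 = n →
      ∃ j ≥ i, (ρ j).1.2.2 = 0 ∧ (ρ j).1.2.1 = (ρ i).1.2.1 := by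
    intro n
    induction n with
    | zero => exact fun i hi => ⟨i, le_rfl, hi, rfl⟩
    | succ n ih =>
      intro i hi
      have h1 := (hf (ρ i)).2.2 n hi
      rw [← hρ] at h1
      obtain ⟨j, hj, h0, hc⟩ := ih (i + 1) h1.2
      exact ⟨j, by omega, h0, hc.trans h1.1⟩
  have hmem : ∀ j, (ρ j).1.2.2 = 0 → (ρ j).1.1 ∈ P (ρ j).1.2.1 := by
    intro j hj
    have := (ρ j).2
    rw [hj] at this
    exact this.1
  refine ⟨fun i => (ρ i).1.1, rfl, fun i => ?_, fun c n => ?_⟩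
  · change R (ρ i).1.1 (ρ (i + 1)).1.1
    rw [hρ]
    exact (hf (ρ i)).1
  · obtain ⟨j, hj, h0, hc⟩ := key _ n rfl
    by_cases hcc : (ρ n).1.2.1 = c
    · refine ⟨j, hj, ?_⟩
      have := hmem j h0
      rwa [hc, hcc] at this
    · have h1 := (hf (ρ j)).2.1 h0
      rw [← hρ] at h1
      obtain ⟨j', hj', h0', hc'⟩ := key _ (j + 1) rfl
      refine ⟨j', by omega, ?_⟩
      have := hmem j' h0'
      rw [hc', h1, hc] at this
      have e : (!(ρ n).1.2.1) = c := by
        revert hcc; cases (ρ n).1.2.1 <;> cases c <;> simp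
      rwa [e] at this

namespace GBA

variable {Q A : Type*}

lemma lfp_subset_ev (B : GBA Q A) (β Y : Set Q) :
    OrderHom.lfp (B.innerHom β Y) ⊆ {q | Ev (fun q q' => ∃ σ, q' ∈ B.delta q σ) Y β q} := by
  apply OrderHom.lfp_le
  rintro q (⟨σ, q', hq', hd⟩ | ⟨⟨σ, q', hq', hd⟩, hβ⟩)
  · exact Ev.step ⟨σ, hd⟩ hq'
  · exact Ev.here hβ ⟨σ, hd⟩ hq'

/-- The states of a path visiting `β` infinitely often lie in the inner least fixed point. -/
lemma range_subset_lfp (B : GBA Q A) (β : Set Q) (w : ℕ → A) (ρ : ℕ → Q)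
    (hρ : ∀ i, ρ (i + 1) ∈ B.delta (ρ i) (w i)) (hβ : ∀ n, ∃ i ≥ n, ρ i ∈ β) :
    Set.range ρ ⊆ OrderHom.lfp (B.innerHom β (Set.range ρ)) := by
  have key : ∀ d i, ρ (i + d) ∈ β → ρ i ∈ OrderHom.lfp (B.innerHom β (Set.range ρ)) := by
    intro d
    induction d with
    | zero =>
      intro i hi
      rw [← OrderHom.map_lfp]
      exact Or.inr ⟨⟨w i, ρ (i + 1), ⟨_, rfl⟩, hρ i⟩, hi⟩
    | succ d ih =>
      intro i hi
      rw [← OrderHom.map_lfp]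
      refine Or.inl ⟨w i, ρ (i + 1), ih (i + 1) ?_, hρ i⟩
      rwa [show i + 1 + d = i + (d + 1) by omega]
  rintro _ ⟨i, rfl⟩
  obtain ⟨j, hj, hm⟩ := hβ i
  exact key (j - i) i (by rwa [Nat.add_sub_cancel' hj])

lemma init_mem_FixF_iff (B : GBA Q A) : B.init ∈ B.FixF ↔ B.Lang.Nonempty := by
  constructor
  · intro h
    have hsub : B.FixF ⊆ B.outerHom B.FixF := (OrderHom.map_gfp B.outerHom).ge
    obtain ⟨ρ, h0, hR, hP⟩ := exists_fair_path (fun q q' => ∃ σ, q' ∈ B.delta q σ) B.FixF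
      (fun c => if c then B.acc1 else B.acc2)
      (by
        intro q hq c
        cases c
        · exact lfp_subset_ev B _ _ (hsub hq).2
        · exact lfp_subset_ev B _ _ (hsub hq).1) _ h
    choose w hw using hR
    exact ⟨w, ρ, ⟨h0, hw⟩, by simpa using hP true, by simpa using hP false⟩
  · rintro ⟨w, ρ, ⟨h0, hρ⟩, h1, h2⟩
    have : Set.range ρ ⊆ B.FixF := OrderHom.le_gfp _ <|
      Set.subset_inter (range_subset_lfp B _ w ρ hρ h1) (range_subset_lfp B _ w ρ hρ h2)
    exact this ⟨0, h0⟩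

end GBA

lemma NBW.prod_lang {Q1 Q2 A : Type*} (M1 : NBW Q1 A) (M2 : NBW Q2 A) :
    (M1.prod M2).Lang = M1.Lang ∩ M2.Lang := by
  ext w
  constructor
  · rintro ⟨ρ, ⟨h0, hρ⟩, h1, h2⟩
    exact ⟨⟨fun i => (ρ i).1, ⟨congrArg Prod.fst h0, fun i => (hρ i).1⟩, h1⟩,
      ⟨fun i => (ρ i).2, ⟨congrArg Prod.snd h0, fun i => (hρ i).2⟩, h2⟩⟩
  · rintro ⟨⟨ρ, ⟨h0, hρ⟩, h1⟩, ⟨ρ', ⟨h0', hρ'⟩, h2⟩⟩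
    exact ⟨fun i => (ρ i, ρ' i), ⟨Prod.ext h0 h0', fun i => ⟨hρ i, hρ' i⟩⟩, h1, h2⟩

/-! ### Words accepted by `KVMH` are rejected -/

/-- A nonincreasing sequence of naturals is eventually constant. -/
lemma eventually_const_of_antitone (f : ℕ → ℕ) (hf : ∀ i, f (i + 1) ≤ f i) :
    ∃ m, ∀ i ≥ m, f i = f m := by
  have ha : Antitone f := antitone_nat_of_succ_le hf
  exact ⟨Function.argmin f, fun i hi => le_antisymm (ha hi) (Function.argmin_le f i)⟩

section KV

variable {Q A : Type*}

lemma KVMH_delta {M : NBW Q A} {k : ℕ} {p q : Set (Q × ℕ) × Set (Q × ℕ)} {σ : A}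
    (h : q ∈ (KVMH M k).delta p σ) :
    q.1 ∈ Qk M k ∧ kvStep M σ p.1 q.1 ∧ q.2 ⊆ q.1 ∧
      (p.2 = ∅ → q.2 = q.1 \ kvOdd Q k) ∧
      (p.2 ≠ ∅ → ∃ o', q.2 = o' \ kvOdd Q k ∧ o' ⊆ q.1 ∧ kvStep M σ p.2 o') := by
  unfold KVMH at h
  by_cases hp : p.2 = ∅
  · simp only [hp, if_true] at h
    obtain ⟨s', hs, rfl, hst⟩ := h
    exact ⟨hs, hst, Set.sdiff_subset, fun _ => rfl, fun h => absurd hp h⟩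
  · simp only [hp, if_false] at h
    obtain ⟨s', hs, o', rfl, ho, hst, hst'⟩ := h
    exact ⟨hs, hst, Set.sdiff_subset.trans ho, fun h => absurd h hp, fun _ => ⟨o', rfl, ho, hst'⟩⟩

lemma not_mem_lang_of_KVMH (M : NBW Q A) (k : ℕ) (w : ℕ → A) (hw : w ∈ (KVMH M k).Lang) :
    w ∉ M.Lang := by
  classical
  rintro ⟨ρ, ⟨hρ0, hρ⟩, hacc⟩
  obtain ⟨p, ⟨hp0, hp⟩, hpacc⟩ := hw
  have hex : ∀ i, ∃ n, (ρ i, n) ∈ (p i).1 := by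
    intro i
    induction i with
    | zero => exact ⟨k, by rw [hp0, hρ0]; exact rfl⟩
    | succ i ih =>
      obtain ⟨n, hn⟩ := ih
      obtain ⟨n', _, hn'⟩ := (KVMH_delta (hp i)).2.1 _ hn _ (hρ i)
      exact ⟨n', hn'⟩
  let f : ℕ → ℕ := fun i => Nat.find (hex i)
  have hfm : ∀ i, (ρ i, f i) ∈ (p i).1 := fun i => Nat.find_spec (hex i)
  have hfle : ∀ i n, (ρ i, n) ∈ (p i).1 → f i ≤ n := fun i n h => Nat.find_min' (hex i) h
  obtain ⟨m, hm⟩ := eventually_const_of_antitone f (by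
    intro i
    obtain ⟨n', hle, hn'⟩ := (KVMH_delta (hp i)).2.1 _ (hfm i) _ (hρ i)
    exact (hfle _ _ hn').trans hle)
  have heven : Even (f m) := by
    obtain ⟨i, hi, ha⟩ := hacc (m + 1)
    obtain ⟨i, rfl⟩ : ∃ j, i = j + 1 := ⟨i - 1, by omega⟩
    have := ((KVMH_delta (hp i)).1 _ (hfm (i + 1))).2 ha
    rwa [hm (i + 1) (by omega)] at this
  have hnodd : ∀ l, (l, f m) ∉ kvOdd Q k := fun l h => Nat.not_odd_iff_even.2 heven h.1
  obtain ⟨i, hi, hi0⟩ := hpacc m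
  have stay : ∀ d, (ρ (i + 1 + d), f m) ∈ (p (i + 1 + d)).2 := by
    intro d
    induction d with
    | zero =>
      rw [Nat.add_zero, (KVMH_delta (hp i)).2.2.2.1 hi0]
      refine ⟨?_, hnodd _⟩
      have := hfm (i + 1)
      rwa [hm (i + 1) (by omega)] at this
    | succ d ih =>
      obtain ⟨o', he, hsub, hst⟩ := (KVMH_delta (hp (i + 1 + d))).2.2.2.2
        (Set.nonempty_iff_ne_empty.1 ⟨_, ih⟩)
      obtain ⟨n', hle, hn'⟩ := hst _ ih _ (hρ _)
      have h1 := hfle _ _ (hsub hn')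
      rw [hm (i + 1 + d + 1) (by omega)] at h1
      obtain rfl : n' = f m := le_antisymm hle h1
      change _ ∈ (p (i + 1 + d + 1)).2
      rw [he]
      exact ⟨hn', hnodd _⟩
  obtain ⟨j, hj, hj0⟩ := hpacc (i + 1)
  have := stay (j - (i + 1))
  rw [Nat.add_sub_cancel' hj, show (p j).2 = ∅ from hj0] at this
  exact this

/-! ### The run DAG and its peeling -/

/-- Edges of the run DAG of `M` on `w`; the vertex `(l, j)` is the state `l` at time `j`. -/
def Edge (M : NBW Q A) (w : ℕ → A) (v v' : Q × ℕ) : Prop :=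
  v'.2 = v.2 + 1 ∧ v'.1 ∈ M.delta v.1 (w v.2)

/-- Vertices of the run DAG reachable from the initial vertex. -/
inductive Reach (M : NBW Q A) (w : ℕ → A) : Q × ℕ → Prop
  | init : Reach M w (M.init, 0)
  | step {v u : Q × ℕ} : Reach M w v → Edge M w v u → Reach M w u

/-- There is a path of `N` edges from `v` inside `G`. -/
def Alive (M : NBW Q A) (w : ℕ → A) (G : Set (Q × ℕ)) : ℕ → Q × ℕ → Prop
  | 0, v => v ∈ G
  | N + 1, v => v ∈ G ∧ ∃ u, Edge M w v u ∧ Alive M w G N u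

/-- `v` has arbitrarily long paths inside `G`. For finitely many states this amounts to an infinite
path, and its negation says that `v` has finitely many descendants in `G`. -/
def Inf (M : NBW Q A) (w : ℕ → A) (G : Set (Q × ℕ)) (v : Q × ℕ) : Prop :=
  ∀ N, Alive M w G N v

/-- An accepting vertex can be reached from `v` inside `G`. -/
inductive ReachAcc (M : NBW Q A) (w : ℕ → A) (G : Set (Q × ℕ)) : Q × ℕ → Prop
  | here {v : Q × ℕ} : v ∈ G → v.1 ∈ M.acc → ReachAcc M w G v
  | step {v v' : Q × ℕ} : v ∈ G → Edge M w v v' → ReachAcc M w G v' → ReachAcc M w G v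

open Classical in
/-- The decreasing sequence of subgraphs of the run DAG: even steps delete the vertices with
finitely many descendants, odd steps those that reach no accepting vertex. A vertex has rank `r` if
it lies in `peel r` but not in `peel (r + 1)`. -/
noncomputable def peel (M : NBW Q A) (w : ℕ → A) : ℕ → Set (Q × ℕ)
  | 0 => {v | Reach M w v}
  | n + 1 => if Even n then {v | Inf M w (peel M w n) v} else {v | ReachAcc M w (peel M w n) v}

variable {M : NBW Q A} {w : ℕ → A}

lemma peel_succ_even {n : ℕ} (h : Even n) : peel M w (n + 1) = {v | Inf M w (peel M w n) v} := by
  rw [peel, if_pos h]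

lemma peel_succ_odd {n : ℕ} (h : ¬ Even n) :
    peel M w (n + 1) = {v | ReachAcc M w (peel M w n) v} := by
  rw [peel, if_neg h]

lemma Alive.mem {G : Set (Q × ℕ)} {N : ℕ} {v : Q × ℕ} (h : Alive M w G N v) : v ∈ G := by
  cases N with
  | zero => exact h
  | succ N => exact h.1

lemma Alive.pred {G : Set (Q × ℕ)} {N : ℕ} {v : Q × ℕ} (h : Alive M w G (N + 1) v) :
    Alive M w G N v := by
  induction N generalizing v with
  | zero => exact h.1
  | succ N ih =>
    obtain ⟨hv, v', he, h'⟩ := h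
    exact ⟨hv, v', he, ih h'⟩

lemma Alive.mono {G : Set (Q × ℕ)} {N N' : ℕ} (hN : N ≤ N') {v : Q × ℕ}
    (h : Alive M w G N' v) : Alive M w G N v := by
  induction N', hN using Nat.le_induction with
  | base => exact h
  | succ n _ ih => exact ih h.pred

lemma ReachAcc.mem {G : Set (Q × ℕ)} {v : Q × ℕ} (h : ReachAcc M w G v) : v ∈ G := by
  cases h <;> assumption

/-- Finite pigeonhole: if every `N` has an `Alive M w G N` vertex satisfying `S` on level `j`, then
one vertex of that level serves for all `N`. -/
lemma exists_inf [Finite Q] {G : Set (Q × ℕ)} (j : ℕ) (S : Q → Prop)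
    (h : ∀ N, ∃ l, S l ∧ Alive M w G N (l, j)) : ∃ l, S l ∧ Inf M w G (l, j) := by
  by_contra hcon
  have hcon' : ∀ l, ∃ N, S l → ¬ Alive M w G N (l, j) := by
    intro l
    by_contra hl
    push Not at hl
    exact hcon ⟨l, (hl 0).1, fun N => (hl N).2⟩
  choose f hf using hcon'
  obtain ⟨B, hB⟩ := (Set.finite_range f).bddAbove
  obtain ⟨l, hS, hA⟩ := h B
  exact hf l hS (hA.mono (hB ⟨l, rfl⟩))

lemma Inf.exists_succ [Finite Q] {G : Set (Q × ℕ)} {v : Q × ℕ} (h : Inf M w G v) :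
    ∃ v', Edge M w v v' ∧ Inf M w G v' := by
  obtain ⟨l, hl, hI⟩ := exists_inf (M := M) (w := w) (G := G) (v.2 + 1)
    (fun l => l ∈ M.delta v.1 (w v.2)) (by
      intro N
      obtain ⟨_, ⟨l, j⟩, ⟨hj, he⟩, ha⟩ := h (N + 1)
      obtain rfl : j = v.2 + 1 := hj
      exact ⟨l, he, ha⟩)
  exact ⟨(l, v.2 + 1), ⟨rfl, hl⟩, hI⟩

lemma Inf.exists_path [Finite Q] {G : Set (Q × ℕ)} {v : Q × ℕ} (h : Inf M w G v) :
    ∃ π : ℕ → Q × ℕ, π 0 = v ∧ (∀ i, Edge M w (π i) (π (i + 1))) ∧ ∀ i, Inf M w G (π i) := by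
  let T := {v : Q × ℕ // Inf M w G v}
  have hn : ∀ x : T, ∃ y : T, Edge M w x.1 y.1 := fun x => by
    obtain ⟨v', he, hi⟩ := x.2.exists_succ
    exact ⟨⟨v', hi⟩, he⟩
  choose f hf using hn
  let π : ℕ → T := fun i => f^[i] ⟨v, h⟩
  refine ⟨fun i => (π i).1, rfl, fun i => ?_, fun i => (π i).2⟩
  have : π (i + 1) = f (π i) := Function.iterate_succ_apply' f i _
  change Edge M w (π i).1 (π (i + 1)).1
  rw [this]
  exact hf _

lemma inf_of_path {G : Set (Q × ℕ)} (π : ℕ → Q × ℕ) (m : ℕ)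
    (he : ∀ i, Edge M w (π i) (π (i + 1))) (hG : ∀ i ≥ m, π i ∈ G) : Inf M w G (π m) := by
  intro N
  induction N generalizing m with
  | zero => exact hG m le_rfl
  | succ N ih => exact ⟨hG m le_rfl, _, he m, ih (m + 1) fun i hi => hG i (by omega)⟩

lemma path_level (π : ℕ → Q × ℕ) (he : ∀ i, Edge M w (π i) (π (i + 1))) (i : ℕ) :
    (π i).2 = (π 0).2 + i := by
  induction i with
  | zero => rfl
  | succ i ih => rw [(he i).1, ih]; omega

lemma peel_succ_subset (n : ℕ) : peel M w (n + 1) ⊆ peel M w n := by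
  by_cases h : Even n
  · rw [peel_succ_even h]; exact fun v hv => hv 0
  · rw [peel_succ_odd h]; exact fun v hv => ReachAcc.mem hv

lemma peel_antitone : Antitone (peel M w) := antitone_nat_of_succ_le peel_succ_subset

/-- Predecessors survive: this is what makes ranks nonincreasing along edges. -/
lemma peel_pred {r : ℕ} {v v' : Q × ℕ} (hv : v ∈ peel M w r) (he : Edge M w v v')
    (hv' : v' ∈ peel M w (r + 1)) : v ∈ peel M w (r + 1) := by
  by_cases h : Even r
  · rw [peel_succ_even h] at hv' ⊢
    intro N
    cases N with
    | zero => exact hv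
    | succ N => exact ⟨hv, v', he, hv' N⟩
  · rw [peel_succ_odd h] at hv' ⊢
    exact ReachAcc.step hv he hv'

lemma exists_rank {v : Q × ℕ} (h0 : v ∈ peel M w 0) {n : ℕ} (hn : v ∉ peel M w (n + 1)) :
    ∃ r ≤ n, v ∈ peel M w r ∧ v ∉ peel M w (r + 1) := by
  induction n with
  | zero => exact ⟨0, le_rfl, h0, hn⟩
  | succ n ih =>
    by_cases h : v ∈ peel M w (n + 1)
    · exact ⟨n + 1, le_rfl, h, hn⟩
    · obtain ⟨r, hr, h'⟩ := ih h
      exact ⟨r, by omega, h'⟩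

lemma even_rank_of_acc {v : Q × ℕ} {r : ℕ} (hv : v ∈ peel M w r) (hv' : v ∉ peel M w (r + 1))
    (ha : v.1 ∈ M.acc) : Even r := by
  by_contra h
  rw [peel_succ_odd h] at hv'
  exact hv' (ReachAcc.here hv ha)

/-- An infinite path of the run DAG from a reachable vertex which visits accepting states infinitely
often extends to an accepting run of `M`. -/
lemma mem_lang_of_path {v : Q × ℕ} (hv : Reach M w v) (π : ℕ → Q × ℕ) (h0 : π 0 = v)
    (he : ∀ i, Edge M w (π i) (π (i + 1))) (ha : ∀ n, ∃ i ≥ n, (π i).1 ∈ M.acc) :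
    w ∈ M.Lang := by
  induction hv generalizing π with
  | init =>
    refine ⟨fun i => (π i).1, ⟨by simp [h0], fun i => ?_⟩, ha⟩
    have h1 := (he i).2
    rwa [path_level π he i, h0, Nat.zero_add] at h1
  | @step u v' hu hE ih =>
    refine ih (fun i => Nat.casesOn i u π) rfl (fun i => ?_) (fun n => ?_)
    · cases i with
      | zero => simpa [h0] using hE
      | succ i => exact he i
    · obtain ⟨i, hi, h⟩ := ha n
      exact ⟨i + 1, by omega, h⟩

/-- If `w` is rejected, a nonempty `peel (n + 1)` with `n` even has a vertex from which no accepting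
vertex can be reached inside it. -/
lemma exists_accFree [Finite Q] (hw : w ∉ M.Lang) {n : ℕ} (hn : Even n)
    (hne : (peel M w (n + 1)).Nonempty) :
    ∃ v ∈ peel M w (n + 1), ¬ ReachAcc M w (peel M w (n + 1)) v := by
  by_contra hcon
  push Not at hcon
  obtain ⟨v, hv⟩ := hne
  have hev : ∀ q, ReachAcc M w (peel M w (n + 1)) q →
      Ev (Edge M w) (peel M w (n + 1)) {v | v.1 ∈ M.acc} q := by
    intro q hq
    induction hq with
    | here hG ha =>
      have hG' := hG
      rw [peel_succ_even hn] at hG'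
      obtain ⟨v', he, hi⟩ := Inf.exists_succ hG'
      refine Ev.here ha he ?_
      rw [peel_succ_even hn]
      exact hi
    | step _ he _ ih => exact Ev.step he ih
  obtain ⟨π, h0, he, hP⟩ := exists_fair_path (Edge M w) (peel M w (n + 1))
    (fun _ => {v | v.1 ∈ M.acc}) (fun q hq _ => hev q (hcon q hq)) v hv
  exact hw (mem_lang_of_path (peel_antitone (Nat.zero_le _) hv) π h0 he (hP true))

/-- The non-accepting states on level `j` of `peel n`. -/
def width (M : NBW Q A) (w : ℕ → A) (n j : ℕ) : Set Q := {l | l ∉ M.acc ∧ (l, j) ∈ peel M w n}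

lemma width_ssubset [Finite Q] (hw : w ∉ M.Lang) {n : ℕ} (hn : Even n)
    (hne : (peel M w (n + 1)).Nonempty) :
    ∃ J, ∀ j ≥ J, width M w (n + 2) j ⊂ width M w n j := by
  obtain ⟨v, hv, hfree⟩ := exists_accFree hw hn hne
  have hodd : ¬ Even (n + 1) := by rwa [Nat.even_add_one, not_not]
  have hv' := hv
  rw [peel_succ_even hn] at hv'
  obtain ⟨π, h0, he, hI⟩ := Inf.exists_path hv'
  have hmem : ∀ i, π i ∈ peel M w (n + 1) := fun i => by
    rw [peel_succ_even hn]; exact hI i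
  have hnot : ∀ i, ¬ ReachAcc M w (peel M w (n + 1)) (π i) := by
    intro i
    induction i with
    | zero => rwa [h0]
    | succ i ih => exact fun h => ih (ReachAcc.step (hmem i) (he i) h)
  refine ⟨v.2, fun j hj => ?_⟩
  have hlev : (π (j - v.2)).2 = j := by rw [path_level π he, h0]; omega
  have hpair : ((π (j - v.2)).1, j) = π (j - v.2) := Prod.ext rfl hlev.symm
  have hsub : width M w (n + 2) j ⊆ width M w n j :=
    fun l hl => ⟨hl.1, peel_antitone (Nat.le_add_right n 2) hl.2⟩
  refine (Set.ssubset_iff_of_subset hsub).2 ⟨(π (j - v.2)).1, ⟨?_, ?_⟩, ?_⟩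
  · exact fun ha => hnot _ (ReachAcc.here (hmem _) ha)
  · rw [hpair]; exact peel_succ_subset n (hmem _)
  · rintro ⟨_, h⟩
    rw [hpair, peel_succ_odd hodd] at h
    exact hnot _ h

lemma width_bound [Fintype Q] (hw : w ∉ M.Lang) (i : ℕ)
    (hne : (peel M w (2 * i + 1)).Nonempty) :
    ∃ J, ∀ j ≥ J, (width M w (2 * i + 2) j).ncard + (i + 1) ≤ Fintype.card Q - M.acc.ncard := by
  have hprev : ∃ J, ∀ j ≥ J, (width M w (2 * i) j).ncard + i ≤ Fintype.card Q - M.acc.ncard := by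
    induction i with
    | zero =>
      refine ⟨0, fun j _ => ?_⟩
      rw [Nat.add_zero, ← Nat.card_eq_fintype_card, ← Set.ncard_compl]
      exact Set.ncard_le_ncard (fun l hl => hl.1)
    | succ i ih =>
      have hne' : (peel M w (2 * i + 1)).Nonempty := hne.mono (peel_antitone (by omega))
      obtain ⟨J, hJ⟩ := ih hne'
      obtain ⟨J', hJ'⟩ := width_ssubset hw (even_two_mul i) hne'
      refine ⟨max J J', fun j hj => ?_⟩
      have h1 := hJ j (le_of_max_le_left hj)
      have h2 := Set.ncard_lt_ncard (hJ' j (le_of_max_le_right hj))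
      rw [show 2 * (i + 1) = 2 * i + 2 by ring]
      omega
  obtain ⟨J, hJ⟩ := hprev
  obtain ⟨J', hJ'⟩ := width_ssubset hw (even_two_mul i) hne
  refine ⟨max J J', fun j hj => ?_⟩
  have h1 := hJ j (le_of_max_le_left hj)
  have h2 := Set.ncard_lt_ncard (hJ' j (le_of_max_le_right hj))
  omega

lemma peel_empty [Fintype Q] (hw : w ∉ M.Lang) :
    peel M w (2 * (Fintype.card Q - M.acc.ncard) + 1) = ∅ := by
  by_contra hne
  obtain ⟨J, hJ⟩ := width_bound hw _ (Set.nonempty_iff_ne_empty.2 hne)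
  have := hJ J le_rfl
  omega

/-! ### Rejected words are accepted by `KVMH` -/

/-- The vertices of even rank. -/
def evenRank (M : NBW Q A) (w : ℕ → A) : Set (Q × ℕ) :=
  {v | ∃ r, Even r ∧ v ∈ peel M w r ∧ v ∉ peel M w (r + 1)}

/-- Ranks along an infinite path stabilize at some `r`; if `r` were even, the path would witness
that its vertices survive the deletion at step `r`. -/
lemma no_inf_evenRank [Finite Q] (v : Q × ℕ) : ¬ Inf M w (evenRank M w) v := by
  intro h
  obtain ⟨π, h0, he, hI⟩ := h.exists_path
  have hr : ∀ i, π i ∈ evenRank M w := fun i => hI i 0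
  choose r hev hin hout using hr
  obtain ⟨m, hm⟩ := eventually_const_of_antitone r (by
    intro i
    by_contra hlt
    exact hout i (peel_pred (hin i) (he i) (peel_antitone (by omega) (hin (i + 1)))))
  refine hout m ?_
  rw [peel_succ_even (hev m)]
  refine inf_of_path π m he fun i hi => ?_
  have := hin i
  rwa [hm i hi] at this

/-- The ranked level `j` of the run DAG, as a set of pairs (state, rank). -/
def rankLevel (M : NBW Q A) (w : ℕ → A) (j : ℕ) : Set (Q × ℕ) :=
  {x | (x.1, j) ∈ peel M w x.2 ∧ (x.1, j) ∉ peel M w (x.2 + 1)}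

open Classical in
/-- The run of `KVMH M k` on a rejected word `w`: from time `1` on, the first component is the
ranked level, and the second one consists of the even-ranked successors of the previous obligations
or, if there were none, of the whole even-ranked part of the level. -/
noncomputable def kvRun (M : NBW Q A) (w : ℕ → A) (k : ℕ) : ℕ → Set (Q × ℕ) × Set (Q × ℕ)
  | 0 => ({(M.init, k)}, ∅)
  | j + 1 => (rankLevel M w (j + 1),
      (if (kvRun M w k j).2 = ∅ then rankLevel M w (j + 1) else
        {x | x ∈ rankLevel M w (j + 1) ∧ ∃ y ∈ (kvRun M w k j).2, x.1 ∈ M.delta y.1 (w j)})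
        \ kvOdd Q k)

lemma kvRun_snd_subset (k j : ℕ) : (kvRun M w k j).2 ⊆ (kvRun M w k j).1 := by
  cases j with
  | zero => exact Set.empty_subset _
  | succ j =>
    simp only [kvRun]
    split_ifs
    · exact Set.sdiff_subset
    · exact fun x hx => hx.1.1

lemma peel_rank_le {k : ℕ} (hk : peel M w (k + 1) = ∅) {v : Q × ℕ} {r : ℕ} (hv : v ∈ peel M w r) :
    r ≤ k := by
  by_contra h
  have : v ∈ peel M w (k + 1) := peel_antitone (by omega) hv
  rw [hk] at this
  exact this

lemma kvRun_reach (k j : ℕ) {x : Q × ℕ} (hx : x ∈ (kvRun M w k j).1) : Reach M w (x.1, j) := by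
  cases j with
  | zero =>
    obtain rfl : x = (M.init, k) := hx
    exact Reach.init
  | succ j => exact peel_antitone (Nat.zero_le _) hx.1

lemma kvRun_step {k : ℕ} (hk : peel M w (k + 1) = ∅) (j : ℕ) :
    kvStep M (w j) (kvRun M w k j).1 (rankLevel M w (j + 1)) := by
  intro x hx l' hl'
  have he : Edge M w (x.1, j) (l', j + 1) := ⟨rfl, hl'⟩
  have hR : (l', j + 1) ∈ peel M w 0 := Reach.step (kvRun_reach k j hx) he
  have hnot : (l', j + 1) ∉ peel M w (x.2 + 1) := by
    cases j with
    | zero =>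
      obtain rfl : x = (M.init, k) := hx
      simp [hk]
    | succ j => exact fun h => hx.2 (peel_pred hx.1 he h)
  obtain ⟨r, hr, h⟩ := exists_rank hR hnot
  exact ⟨r, hr, h⟩

lemma rankLevel_mem_Qk {k : ℕ} (hk : peel M w (k + 1) = ∅) (j : ℕ) :
    rankLevel M w j ∈ Qk M k :=
  fun _ hx => ⟨peel_rank_le hk hx.1, fun ha => even_rank_of_acc hx.1 hx.2 ha⟩

lemma kvRun_delta {k : ℕ} (hk : peel M w (k + 1) = ∅) (j : ℕ) :
    kvRun M w k (j + 1) ∈ (KVMH M k).delta (kvRun M w k j) (w j) := by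
  unfold KVMH
  by_cases h : (kvRun M w k j).2 = ∅
  · simp only [h, if_true]
    exact ⟨_, rankLevel_mem_Qk hk (j + 1), by simp [kvRun, h], kvRun_step hk j⟩
  · simp only [h, if_false]
    refine ⟨_, rankLevel_mem_Qk hk (j + 1), {x | x ∈ rankLevel M w (j + 1) ∧
      ∃ y ∈ (kvRun M w k j).2, x.1 ∈ M.delta y.1 (w j)}, by simp [kvRun, h],
      fun x hx => hx.1, kvRun_step hk j, ?_⟩
    intro x hx l' hl'
    obtain ⟨n', hle, hn'⟩ := kvRun_step hk j x (kvRun_snd_subset k j hx) l' hl'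
    exact ⟨n', hle, hn', x, hx, hl'⟩

lemma kvRun_evenRank {k : ℕ} (hk : peel M w (k + 1) = ∅) (j : ℕ) {x : Q × ℕ}
    (hx : x ∈ (kvRun M w k j).2) : (x.1, j) ∈ evenRank M w := by
  have hs := kvRun_snd_subset k j hx
  cases j with
  | zero => exact absurd hx (Set.notMem_empty x)
  | succ j =>
    refine ⟨x.2, ?_, hs⟩
    by_contra hodd
    exact hx.2 ⟨Nat.not_even_iff_odd.1 hodd, peel_rank_le hk hs.1⟩

lemma mem_KVMH_lang [Finite Q] {k : ℕ} (hk : peel M w (k + 1) = ∅) : w ∈ (KVMH M k).Lang := by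
  refine ⟨kvRun M w k, ⟨rfl, kvRun_delta hk⟩, fun n => ?_⟩
  by_contra hcon
  push Not at hcon
  have hne : ∀ j ≥ n, (kvRun M w k j).2 ≠ ∅ := fun j hj => hcon j hj
  -- Each obligation stems from an earlier one through even-ranked vertices.
  have halive : ∀ N, ∀ j ≥ n, ∃ y ∈ (kvRun M w k j).2, Alive M w (evenRank M w) N (y.1, j) := by
    intro N
    induction N with
    | zero =>
      intro j hj
      obtain ⟨y, hy⟩ := Set.nonempty_iff_ne_empty.2 (hne j hj)
      exact ⟨y, hy, kvRun_evenRank hk j hy⟩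
    | succ N ih =>
      intro j hj
      obtain ⟨x, hx, hA⟩ := ih (j + 1) (by omega)
      have hx' := hx
      simp only [kvRun, if_neg (hne j hj)] at hx'
      obtain ⟨⟨_, y, hy, hd⟩, _⟩ := hx'
      exact ⟨y, hy, kvRun_evenRank hk j hy, (x.1, j + 1), ⟨rfl, hd⟩, hA⟩
  obtain ⟨l, _, hI⟩ := exists_inf (M := M) (w := w) (G := evenRank M w) n (fun _ => True) (by
    intro N
    obtain ⟨y, _, hA⟩ := halive N n le_rfl
    exact ⟨y.1, trivial, hA⟩)
  exact no_inf_evenRank _ hI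

end KV

/-- `L(A₁) ⊆ L(A₂)` iff `ι_B ∉ F'_B` where `B = A₁ × KVMH(A₂)`. -/
theorem inclusion_iff_fix {Q1 Q2 A : Type*} [Fintype Q1] [Fintype Q2] [Fintype A]
    (M1 : NBW Q1 A) (M2 : NBW Q2 A) (k : ℕ)
    (hk : k = 2 * (Fintype.card Q2 - M2.acc.ncard)) :
    M1.Lang ⊆ M2.Lang ↔ (M1.prod (KVMH M2 k)).init ∉ (M1.prod (KVMH M2 k)).FixF := by
  rw [GBA.init_mem_FixF_iff, NBW.prod_lang]
  constructor
  · rintro h ⟨w, h1, h2⟩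
    exact not_mem_lang_of_KVMH M2 k w h2 (h h1)
  · intro h w hw
    by_contra hw2
    refine h ⟨w, hw, mem_KVMH_lang ?_⟩
    rw [hk]
    exact peel_empty hw2
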